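/- Let T be a tree and let 𝒜_T denote the set of static-included vertices of T. Then every end-vertex of each insulated α₃-critical edge of T has exactly one neighbor in 𝒜_T, and that neighbor is an isolated vertex of the induced subgraph T[𝒜_T]. -/

import Mathlib

open SimpleGraph

/-- `l` is a (not necessarily induced) `k`-path in `G`: a list of `k` pairwise distinct
vertices in which consecutive vertices are adjacent. -/
def IsKPath {V : Type*} (G : SimpleGraph V) (k : ℕ) (l : List V) : Prop :=
  l.length = k ∧ l.Nodup ∧ l.Chain' G.Adj

/-- A `k`-matching in `G`: a finite set of pairwise vertex-disjoint `k`-paths. -/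
def IsKMatching {V : Type*} (G : SimpleGraph V) (k : ℕ) (M : Finset (List V)) : Prop :=
  (∀ l ∈ M, IsKPath G k l) ∧
    (M : Set (List V)).Pairwise fun l₁ l₂ => ∀ v ∈ l₁, v ∉ l₂

/-- The `k`-matching number `μ_k(G)`: the maximum cardinality of a `k`-matching. -/
noncomputable def kMatchNum {V : Type*} (G : SimpleGraph V) (k : ℕ) : ℕ :=
  sSup {n | ∃ M : Finset (List V), IsKMatching G k M ∧ M.card = n}

/-- A maximum `k`-matching: a `k`-matching of cardinality `μ_k(G)`. -/
def IsMaxKMatching {V : Type*} (G : SimpleGraph V) (k : ℕ) (M : Finset (List V)) : Prop :=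
  IsKMatching G k M ∧ M.card = kMatchNum G k

/-- A `k`-independent set: a set of vertices whose induced subgraph contains no `k`-path. -/
def IsKIndepSet {V : Type*} (G : SimpleGraph V) (k : ℕ) (S : Finset V) : Prop :=
  ∀ l : List V, IsKPath G k l → ¬ (∀ v ∈ l, v ∈ S)

/-- The `k`-independence number `α_k(G)`. -/
noncomputable def kIndepNum {V : Type*} (G : SimpleGraph V) (k : ℕ) : ℕ :=
  sSup {n | ∃ S : Finset V, IsKIndepSet G k S ∧ S.card = n}

/-- A `k`-vertex cover: a set of vertices meeting every `k`-path of `G`. -/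
def IsKCover {V : Type*} (G : SimpleGraph V) (k : ℕ) (C : Finset V) : Prop :=
  ∀ l : List V, IsKPath G k l → ∃ v ∈ l, v ∈ C

/-- The `k`-vertex cover number `τ_k(G)`. -/
noncomputable def kCoverNum {V : Type*} (G : SimpleGraph V) (k : ℕ) : ℕ :=
  sInf {n | ∃ C : Finset V, IsKCover G k C ∧ C.card = n}

/-- A dissociation set: a set of vertices inducing a subgraph of maximum degree at most 1,
i.e. every vertex of `S` has at most one neighbour inside `S`. -/
def IsDissocSet {V : Type*} (G : SimpleGraph V) (S : Finset V) : Prop :=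
  ∀ v ∈ S, ∀ u ∈ S, ∀ w ∈ S, G.Adj v u → G.Adj v w → u = w

/-- The dissociation number `α₃(G)`. -/
noncomputable def dissNum {V : Type*} (G : SimpleGraph V) : ℕ :=
  sSup {n | ∃ S : Finset V, IsDissocSet G S ∧ S.card = n}

/-- A maximum dissociation set: a dissociation set of cardinality `α₃(G)`. -/
def IsMaxDissocSet {V : Type*} (G : SimpleGraph V) (S : Finset V) : Prop :=
  IsDissocSet G S ∧ S.card = dissNum G

/-- `uv` is an `α₃`-critical edge of `G`: deleting it increases the dissociation number. -/
def IsAlpha3Critical {V : Type*} (G : SimpleGraph V) (u v : V) : Prop :=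
  G.Adj u v ∧ dissNum G < dissNum (G.deleteEdges {s(u, v)})

/-- `uv` is a `μ₃`-critical edge of `G`: deleting it decreases the `3`-matching number. -/
def IsMu3Critical {V : Type*} (G : SimpleGraph V) (u v : V) : Prop :=
  G.Adj u v ∧ kMatchNum (G.deleteEdges {s(u, v)}) 3 < kMatchNum G 3

/-- An insulated `α₃`-critical edge: an `α₃`-critical edge sharing no end-vertex with any
other `α₃`-critical edge. -/
def IsInsulated {V : Type*} (G : SimpleGraph V) (u v : V) : Prop :=
  IsAlpha3Critical G u v ∧
    ∀ x y : V, IsAlpha3Critical G x y → s(x, y) ≠ s(u, v) →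
      x ≠ u ∧ x ≠ v ∧ y ≠ u ∧ y ≠ v

/-- A flexible vertex: one lying in some but not all maximum dissociation sets. -/
def IsFlexible {V : Type*} (G : SimpleGraph V) (v : V) : Prop :=
  (∃ S : Finset V, IsMaxDissocSet G S ∧ v ∈ S) ∧
    (∃ S : Finset V, IsMaxDissocSet G S ∧ v ∉ S)

/-- The set of static-included vertices: vertices lying in every maximum dissociation set. -/
def staticIncluded {V : Type*} (G : SimpleGraph V) : Set V :=
  {v | ∀ S : Finset V, IsMaxDissocSet G S → v ∈ S}

/-- The set of static-excluded vertices: vertices lying in no maximum dissociation set. -/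
def staticExcluded {V : Type*} (G : SimpleGraph V) : Set V :=
  {v | ∀ S : Finset V, IsMaxDissocSet G S → v ∉ S}

/-- The (unordered) edge `uv` occurs as an edge of the path recorded by the list `l`. -/
def EdgeInList {V : Type*} (l : List V) (u v : V) : Prop :=
  ∃ p ∈ l.zip l.tail, p = (u, v) ∨ p = (v, u)

lemma dissoc_card_le {V : Type*} [Fintype V] {G : SimpleGraph V} {S : Finset V}
    (h : IsDissocSet G S) : S.card ≤ dissNum G := by
  apply le_csSup
  · refine ⟨Fintype.card V, ?_⟩
    rintro n ⟨S, -, rfl⟩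
    exact Finset.card_le_univ S
  · exact ⟨S, h, rfl⟩

lemma dissoc_exists_max {V : Type*} [Fintype V] (G : SimpleGraph V) :
    ∃ S : Finset V, IsDissocSet G S ∧ S.card = dissNum G := by
  have := Nat.sSup_mem (s := {n | ∃ S : Finset V, IsDissocSet G S ∧ S.card = n})
    ⟨0, ∅, by intro v hv; simp at hv, rfl⟩
    ⟨Fintype.card V, by
      rintro n ⟨S, -, rfl⟩
      exact Finset.card_le_univ S⟩
  exact this

lemma tree_cut {V : Type*} [Fintype V] [DecidableEq V] {T : SimpleGraph V} (hT : T.IsTree)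
    {w p : V} (h : T.Adj w p) :
    ∃ C : Finset V, w ∈ C ∧ p ∉ C ∧ ∀ x ∈ C, ∀ y, y ∉ C → T.Adj x y → x = w ∧ y = p := by
  classical
  have hb : ¬ (T.deleteEdges {s(w, p)}).Reachable w p := by
    have := (SimpleGraph.isAcyclic_iff_forall_adj_isBridge.1 hT.isAcyclic) h
    rw [SimpleGraph.isBridge_iff] at this
    exact this
  refine ⟨Finset.univ.filter fun x => (T.deleteEdges {s(w, p)}).Reachable w x, ?_, ?_, ?_⟩
  · simp
  · simpa using hb
  · intro x hx y hy hxy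
    simp only [Finset.mem_filter, Finset.mem_univ, true_and] at hx hy
    by_cases he : s(x, y) = s(w, p)
    · rcases Sym2.eq_iff.1 he with h1 | ⟨rfl, rfl⟩
      · exact h1
      · exact absurd hx hb
    · refine absurd (hx.trans (SimpleGraph.Adj.reachable ?_)) hy
      rw [SimpleGraph.deleteEdges_adj]
      exact ⟨hxy, by simpa using he⟩

lemma dissoc_splice {V : Type*} [DecidableEq V] {G : SimpleGraph V} (C S X : Finset V)
    (hS : IsDissocSet G S) (hX : IsDissocSet G X)
    (hc : ∀ x ∈ C, ∀ y, y ∉ C → x ∈ X → y ∈ S → ¬ G.Adj x y) :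
    IsDissocSet G ((S \ C) ∪ (X ∩ C)) := by
  have hc' : ∀ x ∈ C, ∀ y, y ∉ C → x ∈ X → y ∈ S → ¬ G.Adj y x :=
    fun x h1 y h2 h3 h4 h5 => hc x h1 y h2 h3 h4 h5.symm
  intro a ha b hb c hcc hab hac
  simp only [Finset.mem_union, Finset.mem_sdiff, Finset.mem_inter] at ha hb hcc
  have := hS a
  have := hX a
  grind

lemma splice_card {V : Type*} [DecidableEq V] (C S X : Finset V) :
    ((S \ C) ∪ (X ∩ C)).card + ((X \ C) ∪ (S ∩ C)).card = S.card + X.card := by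
  rw [Finset.card_union_of_disjoint, Finset.card_union_of_disjoint]
  · have := Finset.card_sdiff_add_card_inter S C
    have := Finset.card_sdiff_add_card_inter X C
    omega
  all_goals
    rw [Finset.disjoint_left]
    intro a
    simp only [Finset.mem_sdiff, Finset.mem_inter]
    tauto

lemma dissoc_mono {V : Type*} {G : SimpleGraph V} {S X : Finset V}
    (hS : IsDissocSet G S) (h : X ⊆ S) : IsDissocSet G X :=
  fun a ha b hb c hc => hS a (h ha) b (h hb) c (h hc)

lemma half_insulated {V : Type*} [Fintype V] [DecidableEq V]
    (T H : SimpleGraph V) (hT : T.IsTree) (u v : V) (huv : T.Adj u v)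
    (hH : ∀ a b, H.Adj a b ↔ T.Adj a b ∧ ¬ (a = u ∧ b = v) ∧ ¬ (a = v ∧ b = u))
    (S : Finset V) (hS : IsDissocSet H S) (hSc : dissNum T < S.card)
    (hst : ∀ M : Finset V, IsDissocSet H M → dissNum T < M.card →
      (u ∈ M ∧ ∃ x ∈ M, H.Adj u x) ∧ (v ∈ M ∧ ∃ x ∈ M, H.Adj v x)) :
    (∃! w : V, w ∈ staticIncluded T ∧ T.Adj v w) ∧
      ∀ w ∈ staticIncluded T, T.Adj v w → ∀ x ∈ staticIncluded T, ¬ T.Adj w x := by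
  have huv' : u ≠ v := huv.ne
  obtain ⟨⟨huS, -⟩, hvS, w, hwS, hvw⟩ := hst S hS hSc
  have hTvw := ((hH _ _).1 hvw).1
  have hwu : w ≠ u := fun h => ((hH _ _).1 hvw).2.2 ⟨rfl, h⟩
  have hwv : w ≠ v := hTvw.ne'
  have hle : ∀ a b, H.Adj a b → T.Adj a b := fun a b h => ((hH a b).1 h).1
  have hTH : ∀ M, IsDissocSet T M → IsDissocSet H M := fun M hM a ha b hb c hc h1 h2 =>
    hM a ha b hb c hc (hle _ _ h1) (hle _ _ h2)
  have hEu : IsDissocSet T (S.erase u) := by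
    intro a ha b hb c hc h1 h2
    simp only [Finset.mem_erase] at ha hb hc
    exact hS a ha.2 b hb.2 c hc.2 ((hH _ _).2 ⟨h1, by tauto, by tauto⟩)
      ((hH _ _).2 ⟨h2, by tauto, by tauto⟩)
  have hEv : IsDissocSet T (S.erase v) := by
    intro a ha b hb c hc h1 h2
    simp only [Finset.mem_erase] at ha hb hc
    exact hS a ha.2 b hb.2 c hc.2 ((hH _ _).2 ⟨h1, by tauto, by tauto⟩)
      ((hH _ _).2 ⟨h2, by tauto, by tauto⟩)
  have hcu := Finset.card_erase_of_mem huS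
  have hcv := Finset.card_erase_of_mem hvS
  have hu1 := dissoc_card_le hEu
  have hmu : IsMaxDissocSet T (S.erase u) := ⟨hEu, by omega⟩
  have hmv : IsMaxDissocSet T (S.erase v) := ⟨hEv, by omega⟩
  have hvA : v ∉ staticIncluded T := fun h => by simpa using h _ hmv
  have huni : ∀ x, x ∈ staticIncluded T → T.Adj v x → x = w := fun x hx hvx =>
    hEu v (by simp [hvS, huv'.symm]) x (hx _ hmu) w (by simp [hwS, hwu]) hvx hTvw
  -- cut at `w`
  obtain ⟨C, hwC, hvC, hC⟩ := tree_cut hT hTvw.symm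
  obtain ⟨A, huA, hvA', hA⟩ := tree_cut hT huv
  have key : ∀ M, IsDissocSet H M → w ∉ M → (M.erase v).card < dissNum T := by
    intro M hM hwM
    by_contra hlt
    have h1 : IsDissocSet H ((S \ C) ∪ ((M.erase v) ∩ C)) := by
      apply dissoc_splice _ _ _ hS (dissoc_mono hM (Finset.erase_subset _ _))
      intro x hx y hy hxM hyS hxy
      obtain ⟨rfl, rfl⟩ := hC x hx y hy (hle _ _ hxy)
      simp [hwM] at hxM
    have h2 : IsDissocSet H (((M.erase v) \ C) ∪ (S ∩ C)) := by
      apply dissoc_splice _ _ _ (dissoc_mono hM (Finset.erase_subset _ _)) hS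
      intro x hx y hy hxM hyS hxy
      obtain ⟨rfl, rfl⟩ := hC x hx y hy (hle _ _ hxy)
      simp at hyS
    have hc := splice_card C S (M.erase v)
    have c1 : ((S \ C) ∪ ((M.erase v) ∩ C)).card ≤ dissNum T := by
      by_contra hlt
      obtain ⟨-, -, x, hx, hvx⟩ := hst _ h1 (by omega)
      simp only [Finset.mem_union, Finset.mem_sdiff, Finset.mem_inter, Finset.mem_erase] at hx
      rcases hx with ⟨hxS, hxC⟩ | ⟨⟨_, hxM⟩, hxC⟩
      · have := hS v hvS x hxS w hwS hvx hvw
        exact hxC (this ▸ hwC)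
      · have := (hC x hxC v hvC (hle _ _ hvx).symm).1
        exact hwM (this ▸ hxM)
    have c2 : (((M.erase v) \ C) ∪ (S ∩ C)).card ≤ dissNum T := by
      by_contra hlt
      obtain ⟨-, hv, -⟩ := hst _ h2 (by omega)
      simp [hvC] at hv
    omega
  have hwA : w ∈ staticIncluded T := by
    intro S' hS'
    by_contra hw
    have hd := hS'.1
    have hdc := hS'.2
    have hvS' : v ∈ S' := by
      by_contra hv
      have := key S' (hTH _ hd) hw
      rw [Finset.erase_eq_of_notMem hv] at this
      omega
    have hwA' : w ∉ A := fun h => hwu (hA w h v hvA' hTvw.symm).1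
    have hcross : ∀ x ∈ A, ∀ y, y ∉ A → ¬ H.Adj x y := fun x hx y hy h =>
      ((hH x y).1 h).2.1 (hA x hx y hy (hle _ _ h))
    have h1 : IsDissocSet H ((S' \ A) ∪ (S ∩ A)) :=
      dissoc_splice _ _ _ (hTH _ hd) hS fun x hx y hy _ _ => hcross x hx y hy
    have h2 : IsDissocSet H ((S \ A) ∪ (S' ∩ A)) :=
      dissoc_splice _ _ _ hS (hTH _ hd) fun x hx y hy _ _ => hcross x hx y hy
    have hc := splice_card A S' S
    have c1 := key _ h1 (by simp [hw, hwA'])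
    rw [Finset.card_erase_of_mem (by simp [hvS', hvA'])] at c1
    have c2 : ((S \ A) ∪ (S' ∩ A)).card ≤ dissNum T := by
      by_contra hlt
      obtain ⟨⟨hu, x, hx, hux⟩, -⟩ := hst _ h2 (by omega)
      have huS' : u ∈ S' := by
        simp [huA] at hu
        exact hu
      have hxA : x ∈ A := by
        by_contra h
        exact hcross u huA x h hux
      have hxS' : x ∈ S' := by
        simp [hxA] at hx
        exact hx
      have := hd u huS' x hxS' v hvS' (hle _ _ hux) huv
      exact hvA' (this ▸ hxA)
    omega
  refine ⟨⟨w, ⟨hwA, hTvw⟩, fun y hy => huni y hy.1 hy.2⟩, ?_⟩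
  intro w' hw' hvw' x hx hwx
  obtain rfl := huni w' hw' hvw'
  have := hEu w' (hw' _ hmu) x (hx _ hmu) v (by simp [hvS, huv'.symm]) hwx hTvw.symm
  exact hvA (this ▸ hx)

lemma isolated_critical {V : Type*} [Fintype V] [DecidableEq V]
    (T H : SimpleGraph V) (u v : V) (huv : T.Adj u v)
    (hH : ∀ a b, H.Adj a b ↔ T.Adj a b ∧ ¬ (a = u ∧ b = v) ∧ ¬ (a = v ∧ b = u))
    (hins : ∀ w, w ≠ u → ¬ IsAlpha3Critical T v w)
    (M : Finset V) (hM : IsDissocSet H M) (hc : dissNum T < M.card) :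
    u ∈ M ∧ ∃ x ∈ M, H.Adj u x := by
  have nT : ¬ IsDissocSet T M := fun h => by
    have := dissoc_card_le h
    omega
  have huv' := huv.ne
  constructor
  · by_contra hu
    apply nT
    intro a ha b hb c hc h1 h2
    exact hM a ha b hb c hc ((hH _ _).2 ⟨h1, by grind, by grind⟩)
      ((hH _ _).2 ⟨h2, by grind, by grind⟩)
  · by_contra! hu
    by_cases hv : ∃ w ∈ M, v ∈ M ∧ H.Adj v w
    · obtain ⟨w, hw, hvM, hvw⟩ := hv
      have hvw' := (hH _ _).1 hvw
      apply hins w (fun h => hvw'.2.2 ⟨rfl, h⟩)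
      refine ⟨hvw'.1, lt_of_lt_of_le hc (dissoc_card_le ?_)⟩
      intro a ha b hb c hc h1 h2
      rw [SimpleGraph.deleteEdges_adj] at h1 h2
      simp only [Set.mem_singleton_iff, Sym2.eq_iff] at h1 h2
      have k1 := hH a b
      have k2 := hH a c
      have k3 := hM a ha b hb c hc
      have k4 := hM v hvM w hw
      have k5 := hu b hb
      have k6 := hu c hc
      grind
    · push Not at hv
      apply nT
      intro a ha b hb c hc h1 h2
      have k1 := hH a b
      have k2 := hH a c
      have k3 := hM a ha b hb c hc
      have k5 := hu b hb
      have k6 := hu c hc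
      have k7 := hv b hb
      have k8 := hv c hc
      grind

/-- Every end-vertex of each insulated `α₃`-critical edge of a tree `T` has exactly one
neighbour in `𝒜_T` (the set of static-included vertices), and that neighbour is an
isolated vertex of the induced subgraph `T[𝒜_T]`. -/
theorem tree_insulated_endvertex_neighbor {V : Type*} [Fintype V] [DecidableEq V]
    (T : SimpleGraph V) (hT : T.IsTree) (u v : V) (h : IsInsulated T u v) :
    ((∃! w : V, w ∈ staticIncluded T ∧ T.Adj u w) ∧
      ∀ w ∈ staticIncluded T, T.Adj u w → ∀ x ∈ staticIncluded T, ¬ T.Adj w x) ∧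
    ((∃! w : V, w ∈ staticIncluded T ∧ T.Adj v w) ∧
      ∀ w ∈ staticIncluded T, T.Adj v w → ∀ x ∈ staticIncluded T, ¬ T.Adj w x) := by
  have hadj : T.Adj u v := h.1.1
  have hH : ∀ a b, (T.deleteEdges {s(u, v)}).Adj a b ↔
      T.Adj a b ∧ ¬ (a = u ∧ b = v) ∧ ¬ (a = v ∧ b = u) := by
    intro a b
    rw [SimpleGraph.deleteEdges_adj]
    simp only [Set.mem_singleton_iff, Sym2.eq_iff]
    tauto
  have hH' : ∀ a b, (T.deleteEdges {s(u, v)}).Adj a b ↔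
      T.Adj a b ∧ ¬ (a = v ∧ b = u) ∧ ¬ (a = u ∧ b = v) := by
    intro a b
    rw [hH]
    tauto
  obtain ⟨S, hS, hSc⟩ := dissoc_exists_max (T.deleteEdges {s(u, v)})
  have hlt : dissNum T < S.card := hSc ▸ h.1.2
  have i1 : ∀ w, w ≠ u → ¬ IsAlpha3Critical T v w := by
    intro w hw hcr
    refine (h.2 v w hcr ?_).2.1 rfl
    rw [Ne, Sym2.eq_iff]
    have := hadj.ne
    tauto
  have i2 : ∀ w, w ≠ v → ¬ IsAlpha3Critical T u w := by
    intro w hw hcr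
    refine (h.2 u w hcr ?_).1 rfl
    rw [Ne, Sym2.eq_iff]
    have := hadj.ne
    tauto
  have s1 := isolated_critical T _ u v hadj hH i1
  have s2 := isolated_critical T _ v u hadj.symm hH' i2
  exact ⟨half_insulated T _ hT v u hadj.symm hH' S hS hlt fun M a b => ⟨s2 M a b, s1 M a b⟩,
    half_insulated T _ hT u v hadj hH S hS hlt fun M a b => ⟨s1 M a b, s2 M a b⟩⟩
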